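/- arXiv:2401.09371 — 2 statements merged into one kernel-verified Lean document; each statement's English description precedes it below -/
import Mathlib

section
/- For every finitely supported sequence r : ℤ → ℂ, every half-bandwidth parameter W ∈ (0, 1/2], and all l, m ∈ ℕ, the tail energy of the half-sample shifted sequence is bounded by the tail energy of the band-limited upsampled sequence over the doubled index range: Ē_{−l,m}(B_W^{1/2} r) ≤ Ē_{−2l,2m}(B_{W/2}(r↑2)). -/
open scoped BigOperators

/-- normalized sinc: sinc(x) = sin(πx)/(πx) for x ≠ 0, sinc(0) = 1. -/
noncomputable def sinc (x : ℝ) : ℝ :=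
  if x = 0 then 1 else Real.sin (Real.pi * x) / (Real.pi * x)

/-- Fractional shift / band-limiting operator `B_W^τ` acting on a sequence. -/
noncomputable def fracShift (W τ : ℝ) (r : ℤ → ℂ) (n : ℤ) : ℂ :=
  ∑' q : ℤ, r q * (sinc (2 * W * ((n : ℝ) - τ - (q : ℝ))) : ℂ)

/-- 2-fold upsampling of a sequence. -/
noncomputable def upsample2 (r : ℤ → ℂ) (n : ℤ) : ℂ :=
  if Even n then r (n / 2) else 0

/-- Tail energy `Ē_{-l,m}(r) = Σ_{n ≤ -l-1} |r n|² + Σ_{n ≥ m+1} |r n|²`. -/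
noncomputable def tailEnergy (l m : ℕ) (r : ℤ → ℂ) : ℝ :=
  (∑' k : ℕ, ‖r (-(l : ℤ) - 1 - (k : ℤ))‖ ^ 2) + ∑' k : ℕ, ‖r ((m : ℤ) + 1 + (k : ℤ))‖ ^ 2
/-!
On the circle `ℝ / ℤ`, multiplication by a bounded function maps `L²` to `L²`, and on Fourier
coefficients it acts as convolution with the coefficients of the multiplier. The sequence
`n ↦ sinc (2W(n - τ))` consists of the Fourier coefficients of a bounded function supported on
the band `[-W, W]`, provided that `W ≤ 1/2`; hence `fracShift W τ` preserves `ℓ²`. Larger bands are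
reduced to this case by upsampling, which halves the band: the samples of `fracShift W τ r` are
those of `fracShift (W/2) (2τ + j) (upsample2 r)` at the points `2n + j`, for any integer `j`.

For `τ = 1/2` and `j = -1` the latter sequence is `fracShift (W/2) 0 (upsample2 r)`, so that the
half-sample shift consists of its odd-indexed values. The indices outside `[-l, m]` land outside
`[-2l, 2m]`, and the comparison of tail energies is that of a square-summable family with a
subfamily.
-/

open MeasureTheory AddCircle
open scoped ENNReal

section Multiplier

variable {T : ℝ} [Fact (0 < T)] {σ f : AddCircle T → ℂ}

theorem hasSum_fourierCoeff_mul_fourierCoeff_sub (hσ : MemLp σ 2 haarAddCircle)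
    (hf : MemLp f 2 haarAddCircle) (n : ℤ) :
    HasSum (fun q ↦ fourierCoeff f q * fourierCoeff σ (n - q)) (fourierCoeff (σ * f) n) := by
  have hg : MemLp (fun t ↦ star (σ t) * fourier n t) 2 haarAddCircle :=
    ((fourier n).memLp haarAddCircle ℂ (p := ∞)).mul' hσ.star
  have inner_toLp {h : AddCircle T → ℂ} (hh : MemLp h 2 haarAddCircle) :
      inner ℂ hg.toLp hh.toLp = ∫ t, fourier (-n) t * (σ t * h t) ∂haarAddCircle := by
    rw [L2.inner_def]
    refine integral_congr_ae ?_
    filter_upwards [hg.coeFn_toLp, hh.coeFn_toLp] with t hgt hht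
    rw [hgt, hht, RCLike.inner_apply', map_mul, ← fourier_neg, starRingEnd_apply, star_star]
    ring
  have inner_fourierBasis (q : ℤ) : inner ℂ hg.toLp (fourierBasis q) = fourierCoeff σ (n - q) := by
    rw [coe_fourierBasis]
    refine (inner_toLp ((fourier q).memLp haarAddCircle ℂ)).trans (integral_congr_ae ?_)
    refine .of_forall fun t ↦ ?_
    dsimp only
    rw [neg_sub, sub_eq_neg_add, fourier_add, smul_eq_mul]
    ring
  have fourierBasis_inner (q : ℤ) : inner ℂ (fourierBasis q) hf.toLp = fourierCoeff f q := by
    rw [← HilbertBasis.repr_apply_apply, fourierBasis_repr, fourierCoeff_congr_ae hf.coeFn_toLp]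
  have parseval := fourierBasis.hasSum_inner_mul_inner hg.toLp hf.toLp
  simp only [inner_fourierBasis, fourierBasis_inner, inner_toLp] at parseval
  simpa only [mul_comm (fourierCoeff σ _)] using! parseval

theorem memℓp_two_fourierCoeff (hf : MemLp f 2 haarAddCircle) : Memℓp (fourierCoeff f) 2 := by
  have hcoeff : ⇑(fourierBasis.repr hf.toLp) = fourierCoeff f := by
    ext n
    rw [fourierBasis_repr, fourierCoeff_congr_ae hf.coeFn_toLp]
  exact hcoeff ▸ lp.memℓp _

theorem exists_memLp_two_fourierCoeff_eq {r : ℤ → ℂ} (hr : Memℓp r 2) :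
    ∃ f : AddCircle T → ℂ, MemLp f 2 haarAddCircle ∧ fourierCoeff f = r := by
  refine ⟨fourierBasis.repr.symm ⟨r, hr⟩, Lp.memLp _, funext fun n ↦ ?_⟩
  rw [← fourierBasis_repr, LinearIsometryEquiv.apply_symm_apply]

theorem memℓp_two_tsum_mul_fourierCoeff_sub (hσ : MemLp σ ∞ haarAddCircle) {r : ℤ → ℂ}
    (hr : Memℓp r 2) : Memℓp (fun n ↦ ∑' q, r q * fourierCoeff σ (n - q)) 2 := by
  obtain ⟨f, hf, rfl⟩ := exists_memLp_two_fourierCoeff_eq (T := T) hr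
  simp_rw [(hasSum_fourierCoeff_mul_fourierCoeff_sub (hσ.mono_exponent le_top) hf _).tsum_eq]
  exact memℓp_two_fourierCoeff (hf.mul hσ)

end Multiplier

theorem sinc_eq_real_sinc (x : ℝ) : sinc x = Real.sinc (Real.pi * x) := by
  simp [sinc, Real.sinc, Real.pi_ne_zero]

theorem sinc_neg (x : ℝ) : sinc (-x) = sinc x := by
  simp [sinc]

theorem integral_exp_two_pi_mul_I_eq_sinc (W t : ℝ) :
    ∫ ξ in -W..W, Complex.exp (2 * Real.pi * t * ξ * Complex.I) = 2 * W * sinc (2 * W * t) := by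
  rcases eq_or_ne t 0 with rfl | ht
  · have hconst : (W : ℂ) + W = 2 * W := (two_mul _).symm
    simpa [sinc] using hconst
  have hscale := intervalIntegral.integral_comp_mul_left (a := -W) (b := W)
    (fun x : ℝ ↦ Complex.exp (x * Complex.I)) (c := 2 * Real.pi * t) (by positivity)
  push_cast at hscale
  rw [hscale, mul_neg, integral_exp_mul_I_eq_sinc, sinc_eq_real_sinc]
  have ht0 : (t : ℂ) ≠ 0 := mod_cast ht
  have hpi : (Real.pi : ℂ) ≠ 0 := mod_cast Real.pi_ne_zero
  rw [show Real.pi * (2 * W * t) = 2 * Real.pi * t * W by ring, Complex.real_smul]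
  push_cast
  field_simp

/-- The frequency response of the filter `fracShift W τ`, with respect to the characters
`ξ ↦ exp (2πinξ)` and before periodization: the phase `exp (2πiτξ)` of the shift, cut off to the
band `(-W, W]`. The factor `(2W)⁻¹` compensates for the missing factor `2W` of `sinc` in
`fracShift`. -/
noncomputable def bandSymbol (W τ : ℝ) : ℝ → ℂ :=
  (Set.Ioc (-W) W).indicator fun ξ ↦
    (2 * W : ℂ)⁻¹ * Complex.exp (2 * Real.pi * τ * ξ * Complex.I)

theorem memLp_top_bandSymbol (W τ : ℝ) (μ : Measure ℝ) : MemLp (bandSymbol W τ) ∞ μ := by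
  refine (memLp_top_of_bound (C := ‖(2 * W : ℂ)⁻¹‖) (by fun_prop) ?_).indicator measurableSet_Ioc
  refine .of_forall fun ξ ↦ ?_
  have hexp : ‖Complex.exp (2 * Real.pi * τ * ξ * Complex.I)‖ = 1 :=
    mod_cast Complex.norm_exp_ofReal_mul_I (2 * Real.pi * τ * ξ)
  rw [norm_mul, hexp, mul_one]

theorem fourier_neg_smul_bandSymbol (W τ : ℝ) (n : ℤ) (ξ : ℝ) :
    fourier (-n) (ξ : UnitAddCircle) • bandSymbol W τ ξ = bandSymbol W (τ - n) ξ := by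
  rw [bandSymbol, bandSymbol,
    ← Set.indicator_smul_apply _ fun ξ : ℝ ↦ fourier (-n) (ξ : UnitAddCircle)]
  congr with ξ
  rw [fourier_coe_apply, smul_eq_mul, mul_left_comm, ← Complex.exp_add]
  push_cast
  ring_nf

theorem setIntegral_bandSymbol {W : ℝ} (hW : 0 < W) (τ : ℝ) {s : Set ℝ}
    (hs : Set.Ioc (-W) W ⊆ s) : ∫ ξ in s, bandSymbol W τ ξ = sinc (2 * W * τ) := by
  have hW0 : (W : ℂ) ≠ 0 := mod_cast hW.ne'
  rw [bandSymbol, setIntegral_indicator measurableSet_Ioc, Set.inter_eq_self_of_subset_right hs,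
    ← intervalIntegral.integral_of_le (by linarith), intervalIntegral.integral_const_mul,
    integral_exp_two_pi_mul_I_eq_sinc, inv_mul_cancel_left₀ (mul_ne_zero two_ne_zero hW0)]

theorem fourierCoeff_liftIoc_bandSymbol {W : ℝ} (hW : W ∈ Set.Ioc (0 : ℝ) (1 / 2)) (τ : ℝ)
    (n : ℤ) : fourierCoeff (liftIoc 1 (-1 / 2) (bandSymbol W τ)) n = sinc (2 * W * (n - τ)) := by
  have hband : Set.Ioc (-W) W ⊆ Set.Ioc (-1 / 2) (-1 / 2 + 1) :=
    Set.Ioc_subset_Ioc (by linarith [hW.2]) (by linarith [hW.2])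
  rw [fourierCoeff_liftIoc_eq, fourierCoeffOn_eq_integral, add_sub_cancel_left, div_one, one_smul,
    intervalIntegral.integral_of_le (by norm_num)]
  simp_rw [fourier_neg_smul_bandSymbol]
  rw [setIntegral_bandSymbol hW.1 _ hband, ← neg_sub, mul_neg, sinc_neg]

theorem upsample2_two_mul (r : ℤ → ℂ) (n : ℤ) : upsample2 r (2 * n) = r n := by
  simp [upsample2]

theorem upsample2_eq_zero_of_notMem_range {r : ℤ → ℂ} {n : ℤ}
    (hn : n ∉ Set.range ((2 : ℤ) * ·)) : upsample2 r n = 0 :=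
  if_neg fun h ↦ hn (h.two_dvd.imp fun _ ↦ Eq.symm)

theorem fracShift_upsample2 (W τ : ℝ) (r : ℤ → ℂ) (n : ℤ) :
    fracShift W τ (upsample2 r) n = ∑' q : ℤ, r q * (sinc (2 * W * (n - τ - 2 * q)) : ℂ) := by
  have hinj : Function.Injective ((2 : ℤ) * ·) := mul_right_injective₀ two_ne_zero
  rw [fracShift, ← hinj.tsum_eq]
  · simp [upsample2_two_mul]
  · refine Function.support_subset_iff'.2 fun q hq ↦ ?_
    rw [upsample2_eq_zero_of_notMem_range hq, zero_mul]

theorem fracShift_eq_fracShift_upsample2 (W τ : ℝ) (r : ℤ → ℂ) (n j : ℤ) :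
    fracShift W τ r n = fracShift (W / 2) (2 * τ + j) (upsample2 r) (2 * n + j) := by
  rw [fracShift_upsample2, fracShift]
  congr with q
  push_cast
  ring_nf

theorem memℓp_comp_of_injective {ι κ E : Type*} [NormedAddCommGroup E] {p : ℝ≥0∞} {f : κ → E}
    (hf : Memℓp f p) {g : ι → κ} (hg : Function.Injective g) : Memℓp (f ∘ g) p := by
  rcases p.trichotomy with rfl | rfl | hp
  · exact memℓp_zero (hf.finite_dsupport.preimage hg.injOn)
  · exact memℓp_infty (hf.bddAbove.mono (Set.range_comp_subset_range g (‖f ·‖)))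
  · exact memℓp_gen ((hf.summable hp).comp_injective hg)

theorem memℓp_upsample2 {p : ℝ≥0∞} {r : ℤ → ℂ} (hr : Memℓp r p) : Memℓp (upsample2 r) p := by
  rcases p.trichotomy with rfl | rfl | hp
  · refine memℓp_zero ((hr.finite_dsupport.image (2 * ·)).subset fun n hn ↦ ?_)
    obtain ⟨k, rfl⟩ := not_imp_comm.1 upsample2_eq_zero_of_notMem_range hn
    exact Set.mem_image_of_mem _ (by simpa [upsample2_two_mul] using hn)
  · obtain ⟨C, hC⟩ := hr.bddAbove
    refine memℓp_infty ⟨C, Set.forall_mem_range.2 fun n ↦ ?_⟩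
    rw [upsample2]
    split_ifs
    · exact hC ⟨n / 2, rfl⟩
    · exact norm_zero.trans_le ((norm_nonneg _).trans (hC ⟨0, rfl⟩))
  · have hinj : Function.Injective ((2 : ℤ) * ·) := mul_right_injective₀ two_ne_zero
    refine memℓp_gen ((hinj.summable_iff fun n hn ↦ ?_).1 ?_)
    · rw [upsample2_eq_zero_of_notMem_range hn, norm_zero, Real.zero_rpow hp.ne']
    · simpa only [Function.comp_def, upsample2_two_mul] using hr.summable hp

theorem memℓp_two_fracShift_of_le_half {W : ℝ} (hW : W ∈ Set.Ioc (0 : ℝ) (1 / 2)) (τ : ℝ)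
    {r : ℤ → ℂ} (hr : Memℓp r 2) : Memℓp (fracShift W τ r) 2 := by
  have hsymbol : MemLp (liftIoc 1 (-1 / 2) (bandSymbol W τ)) ∞ haarAddCircle :=
    memLp_haarAddCircle_iff.2 (memLp_top_bandSymbol W τ _).memLp_liftIoc
  convert memℓp_two_tsum_mul_fourierCoeff_sub hsymbol hr with n
  rw [fracShift]
  congr with q
  rw [fourierCoeff_liftIoc_bandSymbol hW]
  push_cast
  ring_nf

theorem memℓp_two_fracShift {W : ℝ} (hW : 0 < W) (τ : ℝ) {r : ℤ → ℂ} (hr : Memℓp r 2) :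
    Memℓp (fracShift W τ r) 2 := by
  obtain ⟨k, hk⟩ := pow_unbounded_of_one_lt (2 * W) one_lt_two
  induction k generalizing W τ r with
  | zero => exact memℓp_two_fracShift_of_le_half ⟨hW, by linarith⟩ τ hr
  | succ k ih =>
    have heven : fracShift W τ r = fracShift (W / 2) (2 * τ) (upsample2 r) ∘ (2 * ·) := by
      ext n
      simpa using fracShift_eq_fracShift_upsample2 W τ r n 0
    have hhalf : 2 * (W / 2) < 2 ^ k := by linarith [pow_succ (2 : ℝ) k]
    rw [heven]
    exact memℓp_comp_of_injective (ih (half_pos hW) _ (memℓp_upsample2 hr) hhalf)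
      (mul_right_injective₀ two_ne_zero)

theorem fracShift_half_eq_fracShift_upsample2_odd (W : ℝ) (r : ℤ → ℂ) :
    fracShift W (1 / 2) r = fun n ↦ fracShift (W / 2) 0 (upsample2 r) (2 * n - 1) := by
  ext n
  simpa using! fracShift_eq_fracShift_upsample2 W (1 / 2) r n (-1)

theorem tailEnergy_odd_le {f : ℤ → ℂ} (hf : Memℓp f 2) (l m : ℕ) :
    tailEnergy l m (fun n ↦ f (2 * n - 1)) ≤ tailEnergy (2 * l) (2 * m) f := by
  have hsum : Summable fun n ↦ ‖f n‖ ^ 2 := by simpa using hf.summable (by norm_num)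
  have hleft : Summable fun k : ℕ ↦ ‖f (-((2 * l : ℕ) : ℤ) - 1 - k)‖ ^ 2 :=
    hsum.comp_injective (i := fun k : ℕ ↦ -((2 * l : ℕ) : ℤ) - 1 - k) fun a b h ↦ by simpa using h
  have hright : Summable fun k : ℕ ↦ ‖f (((2 * m : ℕ) : ℤ) + 1 + k)‖ ^ 2 :=
    hsum.comp_injective (i := fun k : ℕ ↦ ((2 * m : ℕ) : ℤ) + 1 + k) fun a b h ↦ by simpa using h
  unfold tailEnergy
  refine add_le_add ?_ ?_
  · calc ∑' k : ℕ, ‖f (2 * (-l - 1 - k) - 1)‖ ^ 2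
      _ = ∑' k : ℕ, ‖f (-((2 * l : ℕ) : ℤ) - 1 - (2 * k + 2 : ℕ))‖ ^ 2 := by
        push_cast
        ring_nf
      _ ≤ ∑' k : ℕ, ‖f (-((2 * l : ℕ) : ℤ) - 1 - k)‖ ^ 2 :=
        tsum_comp_le_tsum_of_inj hleft (fun _ ↦ by positivity) (fun a b h ↦ by simpa using h)
  · calc ∑' k : ℕ, ‖f (2 * (m + 1 + k) - 1)‖ ^ 2
      _ = ∑' k : ℕ, ‖f (((2 * m : ℕ) : ℤ) + 1 + (2 * k : ℕ))‖ ^ 2 := by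
        push_cast
        ring_nf
      _ ≤ ∑' k : ℕ, ‖f (((2 * m : ℕ) : ℤ) + 1 + k)‖ ^ 2 :=
        tsum_comp_le_tsum_of_inj hright (fun _ ↦ by positivity) (fun a b h ↦ by simpa using h)

theorem tailEnergy_half_shift_le_general {r : ℤ → ℂ} (hr : Memℓp r 2) {W : ℝ} (hW : 0 < W)
    (l m : ℕ) :
    tailEnergy l m (fracShift W (1 / 2) r)
      ≤ tailEnergy (2 * l) (2 * m) (fracShift (W / 2) 0 (upsample2 r)) := by
  rw [fracShift_half_eq_fracShift_upsample2_odd]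
  exact tailEnergy_odd_le (memℓp_two_fracShift (half_pos hW) 0 (memℓp_upsample2 hr)) l m

/-- the tail energy of the half-sample shifted sequence is bounded by the
tail energy of the band-limited upsampled sequence over the doubled index range. -/
theorem tailEnergy_half_shift_le
    (r : ℤ → ℂ) (hr : (Function.support r).Finite)
    (W : ℝ) (hW : W ∈ Set.Ioc (0 : ℝ) (1/2)) (l m : ℕ) :
    tailEnergy l m (fracShift W (1/2) r)
      ≤ tailEnergy (2*l) (2*m) (fracShift (W/2) 0 (upsample2 r)) :=
  tailEnergy_half_shift_le_general ((memℓp_zero hr).of_exponent_ge zero_le) hW.1 l m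
end

section
/- Let L, N′, K, g be positive integers with g ≤ N′. Let H ∈ ℂ^{LN′ × LN′} be a banded lower-triangular matrix, i.e., H[i,j] = 0 unless 0 ≤ i − j ≤ g (a causal channel with maximum delay spread g). Let P ∈ ℂ^{N′ × K} have its first g rows equal to zero (a zero prefix of length g). Then the equivalent channel matrix H_eq := (I_L ⊗ P)^H · H · (I_L ⊗ P) ∈ ℂ^{LK × LK} is block diagonal with K×K blocks: for all block indices l ≠ j in {0,…,L−1}, the sub-block P^H · H_{l,j} · P = 0, where H_{l,j} ∈ ℂ^{N′×N′} is defined by (H_{l,j})[m,m′] = H[lN′ + m, jN′ + m′]. -/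
open scoped BigOperators
open Matrix

/-!
A sample of block `l` at offset `m` comes more than `m` samples after every sample of every earlier
block. Hence, once the receiver discards the first `g` rows of its block, what it keeps lies beyond
the reach of all earlier blocks, while causality excludes the later ones. Off-diagonal blocks are
therefore already annihilated by the receive matrix `Pᴴ`.
-/

section ZeroPrefix

variable {L N : ℕ} {R : Type*}

/-- The time at which sample `a.2` of block `a.1` occurs when blocks of length `N` are sent one
after the other. It takes values in `ℤ` so that delays are differences without truncation. -/
def sampleTime (a : Fin L × Fin N) : ℤ :=
  ((a.1 : ℕ) : ℤ) * (N : ℤ) + ((a.2 : ℕ) : ℤ)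

/-- A causal channel of maximum delay spread `g`: the output at `a` depends on the input at `b` only
if the delay from `b` to `a` lies in `[0, g]`. Rows are outputs and columns are inputs. -/
def IsCausalChannel [Zero R] (H : Matrix (Fin L × Fin N) (Fin L × Fin N) R) (g : ℕ) : Prop :=
  ∀ a b, ¬(0 ≤ sampleTime a - sampleTime b ∧ sampleTime a - sampleTime b ≤ (g : ℤ)) → H a b = 0

theorem sampleTime_add_snd_lt_of_fst_lt {a b : Fin L × Fin N} (hab : a.1 < b.1) :
    sampleTime a + (b.2 : ℕ) < sampleTime b := by
  have offset_lt : ((a.2 : ℕ) : ℤ) < N := by exact_mod_cast a.2.isLt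
  have next_block_le : (((a.1 : ℕ) : ℤ) + 1) * N ≤ ((b.1 : ℕ) : ℤ) * N := by
    gcongr
    exact_mod_cast hab
  unfold sampleTime
  linarith

theorem IsCausalChannel.apply_eq_zero_of_fst_ne [Zero R]
    {H : Matrix (Fin L × Fin N) (Fin L × Fin N) R} {g : ℕ} (hH : IsCausalChannel H g)
    {a b : Fin L × Fin N} (hab : a.1 ≠ b.1) (hg : g ≤ (a.2 : ℕ)) : H a b = 0 := by
  refine hH a b fun ⟨causal, delay_le⟩ => ?_
  rcases hab.lt_or_gt with earlier | later
  · linarith [sampleTime_add_snd_lt_of_fst_lt earlier, causal]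
  · linarith [sampleTime_add_snd_lt_of_fst_lt later, delay_le, Int.ofNat_le.mpr hg]

theorem zero_prefix_block_diagonal_general {κ : Type*} [NonUnitalNonAssocSemiring R]
    {H : Matrix (Fin L × Fin N) (Fin L × Fin N) R} {g : ℕ} (hH : IsCausalChannel H g)
    {Q : Matrix κ (Fin N) R} (hQ : ∀ k, ∀ m : Fin N, (m : ℕ) < g → Q k m = 0)
    {l j : Fin L} (hlj : l ≠ j) :
    Q * Matrix.of (fun m m' : Fin N => H (l, m) (j, m')) = 0 := by
  ext k m'
  rw [Matrix.mul_apply, Matrix.zero_apply]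
  refine Finset.sum_eq_zero fun m _ => ?_
  rcases lt_or_ge (m : ℕ) g with discarded | kept
  · exact mul_eq_zero_of_left (hQ k m discarded) _
  · exact mul_eq_zero_of_right _ (hH.apply_eq_zero_of_fst_ne hlj kept)

end ZeroPrefix

/-- with a zero prefix of length `g` and a causal channel of maximum delay
spread `g`, the equivalent channel matrix `(I_L ⊗ P)ᴴ H (I_L ⊗ P)` is block diagonal:
every off-diagonal sub-block `Pᴴ H_{l,j} P` vanishes. We index the `LN′ × LN′` matrix `H`
by pairs `(l, m) ∈ Fin L × Fin N′` corresponding to the global index `i = l·N′ + m`. -/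
theorem zero_prefix_block_diagonal
    (L N' K g : ℕ) (hL : 0 < L) (hN' : 0 < N') (hK : 0 < K) (hg : 0 < g) (hgN : g ≤ N')
    (H : Matrix (Fin L × Fin N') (Fin L × Fin N') ℂ)
    (hH : ∀ a b : Fin L × Fin N',
      ¬(0 ≤ (((a.1 : ℕ) : ℤ) * (N' : ℤ) + ((a.2 : ℕ) : ℤ))
            - (((b.1 : ℕ) : ℤ) * (N' : ℤ) + ((b.2 : ℕ) : ℤ)) ∧
        (((a.1 : ℕ) : ℤ) * (N' : ℤ) + ((a.2 : ℕ) : ℤ))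
            - (((b.1 : ℕ) : ℤ) * (N' : ℤ) + ((b.2 : ℕ) : ℤ)) ≤ (g : ℤ)) → H a b = 0)
    (P : Matrix (Fin N') (Fin K) ℂ)
    (hP : ∀ m : Fin N', (m : ℕ) < g → ∀ k : Fin K, P m k = 0) :
    ∀ l j : Fin L, l ≠ j →
      Pᴴ * Matrix.of (fun m m' : Fin N' => H (l, m) (j, m')) * P = 0 := by
  intro l j hlj
  have hPH : ∀ k, ∀ m : Fin N', (m : ℕ) < g → Pᴴ k m = 0 := fun k m hm => by simp [hP m hm k]
  rw [zero_prefix_block_diagonal_general hH hPH hlj, Matrix.zero_mul]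
end
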